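/- Let Ω ⊂ ℝ^{n+1} be a bounded convex open set with smooth boundary. Suppose u ∈ C¹(Ω̄) has a single critical point p ∈ Ω, is twice differentiable in Ω \ {p}, satisfies the level set mean curvature flow equation -|Du| div(Du/|Du|) = 1 in Ω \ {p}, and u ≡ u₀ on ∂Ω. Then w := √(2(u - u₀)) is concave on Ω. -/

import Mathlib

open Bornology

namespace ArrivalTime
open Filter Topology Set

/-- Second order necessary condition at a local maximum. -/
lemma second_order {φ φ' : ℝ → ℝ} {m : ℝ} (hmax : IsLocalMax φ 0)
    (h1 : ∀ᶠ s in 𝓝 (0:ℝ), HasDerivAt φ (φ' s) s) (h2 : HasDerivAt φ' m 0) : m ≤ 0 := by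
  by_contra hm
  push Not at hm
  have hd : deriv φ =ᶠ[𝓝 0] φ' := h1.mono fun s hs => hs.deriv
  have hdd : deriv (deriv φ) 0 = m := by rw [hd.deriv_eq]; exact h2.deriv
  have hmin : IsLocalMin φ 0 :=
    isLocalMin_of_deriv_deriv_pos (by rw [hdd]; exact hm) hmax.deriv_eq_zero
      h1.self_of_nhds.continuousAt
  have hc : φ =ᶠ[𝓝 0] fun _ => φ 0 := by
    filter_upwards [hmax, hmin] with s h h' using le_antisymm h h'
  have hc' : deriv φ =ᶠ[𝓝 0] deriv (fun _ => φ 0) := hc.deriv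
  rw [hc'.deriv_eq] at hdd
  simp at hdd
  linarith

/-- Projection of the `k`-th basis vector to the orthogonal complement of `g`. -/
noncomputable def xi {n : ℕ} (g : EuclideanSpace ℝ (Fin (n + 1))) (k : Fin (n + 1)) :
    EuclideanSpace ℝ (Fin (n + 1)) :=
  EuclideanSpace.single k 1 - (g k / ‖g‖ ^ 2) • g

lemma inner_xi {n : ℕ} (g : EuclideanSpace ℝ (Fin (n + 1))) (hg : g ≠ 0) (k : Fin (n + 1)) :
    inner ℝ g (xi g k) = 0 := by
  have : ‖g‖ ≠ 0 := norm_ne_zero_iff.mpr hg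
  rw [xi, inner_sub_right, inner_smul_right, real_inner_self_eq_norm_sq,
    EuclideanSpace.inner_single_right]
  simp
  field_simp
  simp

lemma norm_xi_le {n : ℕ} (g : EuclideanSpace ℝ (Fin (n + 1))) (hg : g ≠ 0) (k : Fin (n + 1)) :
    ‖xi g k‖ ^ 2 ≤ 1 := by
  have h1 : (EuclideanSpace.single k 1 : EuclideanSpace ℝ (Fin (n + 1)))
      = xi g k + (g k / ‖g‖ ^ 2) • g := by simp [xi]
  have h2 : ‖(EuclideanSpace.single k 1 : EuclideanSpace ℝ (Fin (n + 1)))‖ ^ 2 = 1 := by simp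
  rw [h1, norm_add_sq_real, inner_smul_right, real_inner_comm, inner_xi g hg k] at h2
  nlinarith [sq_nonneg ‖(g k / ‖g‖ ^ 2) • g‖]

lemma sum_single {n : ℕ} (g : EuclideanSpace ℝ (Fin (n + 1))) :
    ∑ k, g k • (EuclideanSpace.single k 1 : EuclideanSpace ℝ (Fin (n + 1))) = g := by
  have := (EuclideanSpace.basisFun (Fin (n+1)) ℝ).sum_repr g
  simpa using this

lemma lin_sum {n : ℕ} (g : EuclideanSpace ℝ (Fin (n + 1)))
    (L : EuclideanSpace ℝ (Fin (n + 1)) →L[ℝ] ℝ) :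
    ∑ k, g k * L (EuclideanSpace.single k 1) = L g := by
  have h := congrArg L (sum_single g)
  rw [map_sum] at h
  simpa using h

lemma trace_xi {n : ℕ} (g : EuclideanSpace ℝ (Fin (n + 1))) (hg : g ≠ 0)
    (B : EuclideanSpace ℝ (Fin (n + 1)) →L[ℝ] EuclideanSpace ℝ (Fin (n + 1)) →L[ℝ] ℝ) :
    ∑ k, B (xi g k) (xi g k) = ∑ i, ∑ j, ((if i = j then (1:ℝ) else 0) - g i * g j / ‖g‖ ^ 2)
      * B (EuclideanSpace.single i 1) (EuclideanSpace.single j 1) := by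
  have hn : ‖g‖ ≠ 0 := norm_ne_zero_iff.mpr hg
  have e1 : ∑ k, g k * B (EuclideanSpace.single k 1) g = B g g := by
    simpa using lin_sum g (B.flip g)
  have e2 : ∑ k, g k * B g (EuclideanSpace.single k 1) = B g g := lin_sum g (B g)
  have e3 : ∑ k, g k * g k = ‖g‖ ^ 2 := by
    rw [EuclideanSpace.norm_sq_eq]
    exact Finset.sum_congr rfl fun k _ => by simp [sq]
  have e4 : ∑ i, ∑ j, g i * g j * B (EuclideanSpace.single i 1) (EuclideanSpace.single j 1)
      = B g g := by
    rw [← e1]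
    refine Finset.sum_congr rfl fun i _ => ?_
    rw [← lin_sum g (B (EuclideanSpace.single i 1)), Finset.mul_sum]
    simp [mul_assoc]
  have l : ∑ k, B (xi g k) (xi g k)
      = ∑ k, B (EuclideanSpace.single k 1) (EuclideanSpace.single k 1) - B g g / ‖g‖ ^ 2 := by
    have : ∀ k, B (xi g k) (xi g k) = B (EuclideanSpace.single k 1) (EuclideanSpace.single k 1)
        - (g k * B (EuclideanSpace.single k 1) g) / ‖g‖ ^ 2
        - (g k * B g (EuclideanSpace.single k 1)) / ‖g‖ ^ 2
        + (g k * g k) * (B g g / ‖g‖ ^ 4) := by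
      intro k
      simp only [xi, map_sub, map_smul, sub_apply, smul_apply, smul_eq_mul]
      field_simp
      ring
    simp only [this, Finset.sum_add_distrib, Finset.sum_sub_distrib, ← Finset.sum_div,
      ← Finset.sum_mul, e1, e2, e3]
    field_simp
    ring
  rw [l, ← e4]
  simp only [sub_mul, Finset.sum_sub_distrib, ite_mul, one_mul, zero_mul, Finset.sum_ite_eq,
    Finset.mem_univ, if_true, Finset.sum_div]
  congr 1
  refine Finset.sum_congr rfl fun i _ => Finset.sum_congr rfl fun j _ => by ring

lemma fderiv_eq_inner {n : ℕ} (u : EuclideanSpace ℝ (Fin (n + 1)) → ℝ)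
    (x v : EuclideanSpace ℝ (Fin (n + 1))) : fderiv ℝ u x v = inner ℝ (gradient u x) v := by
  simp [gradient]

/-- The equation in invariant form. -/
lemma eq_xi {n : ℕ} (u : EuclideanSpace ℝ (Fin (n + 1)) → ℝ)
    (x g : EuclideanSpace ℝ (Fin (n + 1))) (s : ℝ) (hs : s ≠ 0) (hg : g ≠ 0)
    (hgr : gradient u x = s • g)
    (hd2 : DifferentiableAt ℝ (fun y => fderiv ℝ u y) x)
    (heq : -(∑ i, ∑ j,
        ((if i = j then (1:ℝ) else 0)
            - fderiv ℝ u x (EuclideanSpace.single i 1)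
              * fderiv ℝ u x (EuclideanSpace.single j 1) / ‖gradient u x‖ ^ 2)
          * fderiv ℝ (fun y => fderiv ℝ u y (EuclideanSpace.single j 1)) x
              (EuclideanSpace.single i 1)) = 1) :
    ∑ k, fderiv ℝ (fderiv ℝ u) x (xi g k) (xi g k) = -1 := by
  have hn : ‖g‖ ≠ 0 := norm_ne_zero_iff.mpr hg
  rw [trace_xi g hg, ← neg_eq_iff_eq_neg]
  refine Eq.trans ?_ heq
  congr 1
  refine Finset.sum_congr rfl fun i _ => Finset.sum_congr rfl fun j _ => ?_
  have h1 : ∀ i, fderiv ℝ u x (EuclideanSpace.single i 1) = s * g i := by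
    intro i
    rw [fderiv_eq_inner, hgr, EuclideanSpace.inner_single_right]
    simp
  have h2 : fderiv ℝ (fun y => fderiv ℝ u y (EuclideanSpace.single j 1)) x
              (EuclideanSpace.single i 1)
      = fderiv ℝ (fderiv ℝ u) x (EuclideanSpace.single i 1) (EuclideanSpace.single j 1) := by
    have := hd2.hasFDerivAt.clm_apply (hasFDerivAt_const (EuclideanSpace.single j (1:ℝ)) x)
    rw [this.fderiv]
    simp
  rw [h1, h1, h2, hgr, norm_smul, mul_pow, Real.norm_eq_abs, sq_abs]
  congr 2
  field_simp

/-- Derivatives along lines. -/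
lemma line_deriv {n : ℕ} {u : EuclideanSpace ℝ (Fin (n + 1)) → ℝ}
    {x v : EuclideanSpace ℝ (Fin (n + 1))} {s : ℝ} (h : DifferentiableAt ℝ u (x + s • v)) :
    HasDerivAt (fun t : ℝ => u (x + t • v)) (fderiv ℝ u (x + s • v) v) s := by
  have h1 : HasDerivAt (fun t : ℝ => x + t • v) v s := by
    simpa using ((hasDerivAt_id s).smul_const v).const_add x
  exact h.hasFDerivAt.comp_hasDerivAt s h1

lemma line_deriv2 {n : ℕ} {u : EuclideanSpace ℝ (Fin (n + 1)) → ℝ}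
    {x v : EuclideanSpace ℝ (Fin (n + 1))}
    (h : DifferentiableAt ℝ (fun y => fderiv ℝ u y) x) :
    HasDerivAt (fun t : ℝ => fderiv ℝ u (x + t • v) v) (fderiv ℝ (fderiv ℝ u) x v v) 0 := by
  have h1 : HasDerivAt (fun t : ℝ => x + t • v) v 0 := by
    simpa using ((hasDerivAt_id (0:ℝ)).smul_const v).const_add x
  have h0 : x + (0:ℝ) • v = x := by simp
  have h2 : HasFDerivAt (fun y => fderiv ℝ u y) (fderiv ℝ (fderiv ℝ u) x) (x + (0:ℝ) • v) := by
    rw [h0]; exact h.hasFDerivAt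
  have h3 := h2.comp_hasDerivAt (0:ℝ) h1
  have h4 := h3.clm_apply (hasDerivAt_const (0:ℝ) v)
  simpa using h4

lemma line_tendsto {n : ℕ} (x v : EuclideanSpace ℝ (Fin (n + 1))) :
    Tendsto (fun t : ℝ => x + t • v) (𝓝 0) (𝓝 x) := by
  have : Continuous (fun t : ℝ => x + t • v) := by fun_prop
  simpa using this.tendsto 0

/-- Barrier estimate. -/
lemma barrier {n : ℕ}
    (Ω : Set (EuclideanSpace ℝ (Fin (n + 1))))
    (hΩo : IsOpen Ω) (hΩb : IsBounded Ω)
    (u : EuclideanSpace ℝ (Fin (n + 1)) → ℝ) (u₀ : ℝ)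
    (hu : ContinuousOn u (closure Ω))
    (hud : ∀ x ∈ Ω, DifferentiableAt ℝ u x)
    (p : EuclideanSpace ℝ (Fin (n + 1)))
    (hcrit : ∀ x ∈ Ω, (gradient u x = 0 ↔ x = p))
    (hud2 : ∀ x ∈ Ω \ {p}, DifferentiableAt ℝ (fun y => fderiv ℝ u y) x)
    (heq : ∀ x ∈ Ω \ {p}, ∀ (g : EuclideanSpace ℝ (Fin (n + 1))) (s : ℝ), s ≠ 0 → g ≠ 0 →
      gradient u x = s • g → ∑ k, fderiv ℝ (fderiv ℝ u) x (xi g k) (xi g k) = -1)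
    (hbc : ∀ x ∈ frontier Ω, u x = u₀)
    (κ : ℝ) (hκ : 0 < κ) (hκ' : 2 * κ * (n + 1) < 1)
    (c : EuclideanSpace ℝ (Fin (n + 1))) (hc : c ≠ p) (R : ℝ) (hR : 0 ≤ R)
    (hball : ∀ y ∈ frontier Ω, R ≤ ‖y - c‖) (x : EuclideanSpace ℝ (Fin (n + 1)))
    (hx : x ∈ closure Ω) : κ * (R ^ 2 - ‖x - c‖ ^ 2) ≤ u x - u₀ := by
  obtain ⟨x₀, hx₀, hmin⟩ := hΩb.isCompact_closure.exists_isMinOn ⟨x, hx⟩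
    (f := fun y => u y + κ * ‖y - c‖ ^ 2) (by fun_prop)
  have hle : u x₀ + κ * ‖x₀ - c‖ ^ 2 ≤ u x + κ * ‖x - c‖ ^ 2 := hmin hx
  by_cases hxo : x₀ ∈ Ω
  · exfalso
    have hloc : IsLocalMin (fun y => u y + κ * ‖y - c‖ ^ 2) x₀ :=
      hmin.isLocalMin (mem_of_superset (hΩo.mem_nhds hxo) subset_closure)
    -- along lines
    have hline : ∀ v, IsLocalMax (fun t : ℝ => -(u (x₀ + t • v) + κ * ‖x₀ + t • v - c‖ ^ 2)) 0 := by
      intro v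
      have := (line_tendsto x₀ v).eventually hloc
      filter_upwards [this] with t ht
      have ht' : u x₀ + κ * ‖x₀ - c‖ ^ 2 ≤ u (x₀ + t • v) + κ * ‖x₀ + t • v - c‖ ^ 2 := ht
      simp only [zero_smul, add_zero]
      linarith
    have hexp : ∀ v (t : ℝ), ‖x₀ + t • v - c‖ ^ 2
        = ‖x₀ - c‖ ^ 2 + 2 * t * inner ℝ (x₀ - c) v + t ^ 2 * ‖v‖ ^ 2 := by
      intro v t
      have : x₀ + t • v - c = (x₀ - c) + t • v := by abel
      rw [this, norm_add_sq_real, inner_smul_right, norm_smul, mul_pow, Real.norm_eq_abs, sq_abs]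
      ring
    simp only [hexp] at hline
    have hd1 : ∀ v, ∀ᶠ s in 𝓝 (0:ℝ), HasDerivAt (fun t : ℝ => -(u (x₀ + t • v) +
        κ * (‖x₀ - c‖ ^ 2 + 2 * t * inner ℝ (x₀ - c) v + t ^ 2 * ‖v‖ ^ 2)))
        (-(fderiv ℝ u (x₀ + s • v) v + κ * (2 * inner ℝ (x₀ - c) v + 2 * s * ‖v‖ ^ 2))) s := by
      intro v
      filter_upwards [(line_tendsto x₀ v).eventually (hΩo.mem_nhds hxo)] with s hs
      have a1 := line_deriv (hud _ hs)
      have a2 : HasDerivAt (fun t : ℝ => κ * (‖x₀ - c‖ ^ 2 + 2 * t * inner ℝ (x₀ - c) v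
          + t ^ 2 * ‖v‖ ^ 2)) (κ * (2 * inner ℝ (x₀ - c) v + 2 * s * ‖v‖ ^ 2)) s := by
        have b1 : HasDerivAt (fun t : ℝ => 2 * t * inner ℝ (x₀ - c) v)
          (2 * inner ℝ (x₀ - c) v) s := by
          simpa using ((hasDerivAt_id s).const_mul 2).mul_const (inner ℝ (x₀ - c) v)
        have b2 : HasDerivAt (fun t : ℝ => t ^ 2 * ‖v‖ ^ 2) (2 * s * ‖v‖ ^ 2) s := by
          simpa using (hasDerivAt_pow 2 s).mul_const (‖v‖ ^ 2)
        exact ((b1.const_add _).add b2).const_mul κ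
      exact (a1.add a2).neg
    have hgr : gradient u x₀ = (-(2 * κ)) • (x₀ - c) := by
      refine ext_inner_right ℝ fun v => ?_
      have := (hline v).hasDerivAt_eq_zero (hd1 v).self_of_nhds
      rw [← fderiv_eq_inner, inner_smul_left]
      simp at this ⊢
      linarith
    have hxp : x₀ ≠ p := by
      intro h
      have h0 := (hcrit x₀ hxo).2 h
      rw [hgr, smul_eq_zero] at h0
      rcases h0 with h0 | h0
      · linarith
      · exact hc (by rw [← h]; exact (sub_eq_zero.1 h0).symm)
    have hg : x₀ - c ≠ 0 := by
      intro h
      rw [h, smul_zero] at hgr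
      exact hxp ((hcrit x₀ hxo).1 hgr)
    have hsum := heq x₀ ⟨hxo, hxp⟩ _ _ (by linarith : -(2 * κ) < 0).ne hg hgr
    have hk : ∀ k, 0 ≤ fderiv ℝ (fderiv ℝ u) x₀ (xi (x₀ - c) k) (xi (x₀ - c) k) + 2 * κ := by
      intro k
      set v := xi (x₀ - c) k with hv
      have hd2 : HasDerivAt (fun s : ℝ => -(fderiv ℝ u (x₀ + s • v) v
          + κ * (2 * inner ℝ (x₀ - c) v + 2 * s * ‖v‖ ^ 2)))
          (-(fderiv ℝ (fderiv ℝ u) x₀ v v + κ * (2 * ‖v‖ ^ 2))) 0 := by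
        have a1 := line_deriv2 (v := v) (hud2 x₀ ⟨hxo, hxp⟩)
        have b1 : HasDerivAt (fun s : ℝ => 2 * s * ‖v‖ ^ 2) (2 * ‖v‖ ^ 2) 0 := by
          simpa using ((hasDerivAt_id (0:ℝ)).const_mul 2).mul_const (‖v‖ ^ 2)
        exact (a1.add ((b1.const_add _).const_mul κ)).neg
      have h1 := second_order (hline v) (hd1 v) hd2
      have h2 := norm_xi_le (x₀ - c) hg k
      rw [← hv] at h2
      nlinarith
    have hs := Finset.sum_nonneg (fun k (_ : k ∈ Finset.univ) => hk k)
    rw [Finset.sum_add_distrib, hsum] at hs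
    simp at hs
    nlinarith
  · have hf : x₀ ∈ frontier Ω := by rw [hΩo.frontier_eq]; exact ⟨hx₀, hxo⟩
    rw [hbc x₀ hf] at hle
    have h1 := hball x₀ hf
    have h2 : R ^ 2 ≤ ‖x₀ - c‖ ^ 2 := by gcongr
    nlinarith

/-- Interior ball condition. -/
lemma interior_ball {n : ℕ} (Ω : Set (EuclideanSpace ℝ (Fin (n + 1)))) (hΩo : IsOpen Ω)
    (f : EuclideanSpace ℝ (Fin (n + 1)) → ℝ) (hf : ContDiff ℝ (⊤ : ℕ∞) f)
    (hΩ : Ω = {x | f x < 0}) (x₀ : EuclideanSpace ℝ (Fin (n + 1))) (hx₀ : x₀ ∈ frontier Ω)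
    (hdf : fderiv ℝ f x₀ ≠ 0) :
    ∃ ν : EuclideanSpace ℝ (Fin (n + 1)), ‖ν‖ = 1 ∧ ∃ R₀ : ℝ, 0 < R₀ ∧ ∀ R, 0 < R → R ≤ R₀ →
      ∀ y, ‖y - (x₀ + R • ν)‖ < R → y ∈ Ω := by
  rw [hΩo.frontier_eq] at hx₀
  have hf0 : f x₀ ≤ 0 := by
    have hcl : IsClosed {x | f x ≤ 0} := isClosed_le hf.continuous continuous_const
    have : Ω ⊆ {x | f x ≤ 0} := by rw [hΩ]; exact fun x (hx : f x < 0) => (le_of_lt hx : f x ≤ 0)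
    exact closure_minimal this hcl hx₀.1
  set g := gradient f x₀ with hgdef
  have hg : g ≠ 0 := by
    intro h
    apply hdf
    ext v
    rw [fderiv_eq_inner, ← hgdef, h]
    simp
  have hgn : 0 < ‖g‖ := norm_pos_iff.mpr hg
  have hdiff : Differentiable ℝ f := hf.differentiable (by simp)
  have hf' : ContDiff ℝ 1 (fderiv ℝ f) := hf.fderiv_right (by norm_cast)
  obtain ⟨K, s, hs, hK⟩ := hf'.contDiffAt.exists_lipschitzOnWith (x := x₀)
  obtain ⟨δ, hδ, hδs⟩ := Metric.mem_nhds_iff.1 hs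
  have hT : ∀ h : EuclideanSpace ℝ (Fin (n + 1)), ‖h‖ < δ →
      f (x₀ + h) ≤ f x₀ + inner ℝ g h + K * ‖h‖ ^ 2 := by
    intro h hh
    have hsub : ∀ y ∈ segment ℝ x₀ (x₀ + h), ‖y - x₀‖ ≤ ‖h‖ := by
      intro y hy
      rw [segment_eq_image'] at hy
      obtain ⟨θ, hθ, rfl⟩ := hy
      simp only [add_sub_cancel_left, norm_smul, Real.norm_eq_abs, abs_of_nonneg hθ.1]
      exact mul_le_of_le_one_left (norm_nonneg _) hθ.2
    have hb : ∀ y ∈ segment ℝ x₀ (x₀ + h), ‖fderiv ℝ f y - fderiv ℝ f x₀‖ ≤ K * ‖h‖ := by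
      intro y hy
      have hy' := hsub y hy
      have := hK.norm_sub_le (hδs (by rw [Metric.mem_ball, dist_eq_norm]; linarith : y ∈ _))
        (hδs (Metric.mem_ball_self hδ))
      exact this.trans (by gcongr)
    have := (convex_segment x₀ (x₀ + h)).norm_image_sub_le_of_norm_hasFDerivWithin_le'
      (f := f) (fun y _ => (hdiff y).hasFDerivAt.hasFDerivWithinAt) hb
      (left_mem_segment ℝ _ _) (right_mem_segment ℝ _ _)
    rw [add_sub_cancel_left, fderiv_eq_inner, ← hgdef, Real.norm_eq_abs] at this
    have := (abs_le.1 this).2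
    nlinarith
  refine ⟨-(‖g‖⁻¹ • g), ?_, min (δ / 2) (‖g‖ / (2 * K + 1)), ?_, ?_⟩
  · rw [norm_neg, norm_smul, norm_inv, norm_norm, inv_mul_cancel₀ hgn.ne']
  · have : (0:ℝ) ≤ K := K.2
    positivity
  · intro R hR hRle y hy
    have hK0 : (0:ℝ) ≤ K := K.2
    have hR1 : R ≤ δ / 2 := hRle.trans (min_le_left _ _)
    have hR2 : R * (2 * K + 1) ≤ ‖g‖ := by
      have := hRle.trans (min_le_right _ _)
      rwa [le_div_iff₀ (by positivity)] at this
    set h := y - x₀ with hh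
    have hy2 : y - (x₀ + R • -(‖g‖⁻¹ • g)) = h + (R * ‖g‖⁻¹) • g := by
      rw [hh, smul_neg, smul_smul]; abel
    rw [hy2] at hy
    have hnn : ‖(R * ‖g‖⁻¹) • g‖ = R := by
      rw [norm_smul, norm_mul, norm_inv, norm_norm, mul_assoc, inv_mul_cancel₀ hgn.ne',
        mul_one, Real.norm_eq_abs, abs_of_pos hR]
    have hhn : ‖h‖ < δ := by
      have : h = (h + (R * ‖g‖⁻¹) • g) - (R * ‖g‖⁻¹) • g := by abel
      have h3 := norm_sub_le (h + (R * ‖g‖⁻¹) • g) ((R * ‖g‖⁻¹) • g)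
      rw [← this, hnn] at h3
      linarith
    have hsq : ‖h + (R * ‖g‖⁻¹) • g‖ ^ 2 < R ^ 2 := by
      have := norm_nonneg (h + (R * ‖g‖⁻¹) • g)
      nlinarith
    rw [norm_add_sq_real, hnn, inner_smul_right, real_inner_comm] at hsq
    have h4 : 2 * R * inner ℝ g h < - (‖g‖ * ‖h‖ ^ 2) := by
      have h5 : ‖g‖ * (‖h‖ ^ 2 + 2 * (R * ‖g‖⁻¹ * inner ℝ g h)) < 0 :=
        mul_neg_of_pos_of_neg hgn (by linarith)
      have h6 : ‖g‖ * (‖h‖ ^ 2 + 2 * (R * ‖g‖⁻¹ * inner ℝ g h))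
        = ‖g‖ * ‖h‖ ^ 2 + 2 * R * inner ℝ g h := by field_simp
      linarith
    have h7 := hT h hhn
    have h8 : x₀ + h = y := by rw [hh]; abel
    rw [h8] at h7
    rw [hΩ]
    show f y < 0
    have h9 : R * (2 * K) * ‖h‖ ^ 2 ≤ ‖g‖ * ‖h‖ ^ 2 := by
      gcongr
      linarith
    have h10 : 2 * R * f y < 0 := by
      have : 2 * R * f y ≤ 2 * R * (inner ℝ g h + K * ‖h‖ ^ 2) := by
        gcongr
        linarith
      nlinarith
    by_contra hcon
    push Not at hcon
    nlinarith [mul_nonneg hR.le hcon]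

lemma w_line {n : ℕ} {Ω : Set (EuclideanSpace ℝ (Fin (n + 1)))} (hΩo : IsOpen Ω)
    {u : EuclideanSpace ℝ (Fin (n + 1)) → ℝ} {u₀ : ℝ}
    (hud : ∀ x ∈ Ω, DifferentiableAt ℝ u x) (hpos : ∀ x ∈ Ω, 0 < u x - u₀)
    {x : EuclideanSpace ℝ (Fin (n + 1))} (hx : x ∈ Ω) (v : EuclideanSpace ℝ (Fin (n + 1))) :
    ∀ᶠ s in 𝓝 (0:ℝ), HasDerivAt (fun t : ℝ => √(2 * (u (x + t • v) - u₀)))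
      (fderiv ℝ u (x + s • v) v / √(2 * (u (x + s • v) - u₀))) s := by
  filter_upwards [(line_tendsto x v).eventually (hΩo.mem_nhds hx)] with s hs
  have h := (((line_deriv (hud _ hs)).sub_const u₀).const_mul 2).sqrt
    (by have := hpos _ hs; positivity)
  rwa [mul_div_mul_left _ _ two_ne_zero] at h

lemma w_line2 {n : ℕ} {Ω : Set (EuclideanSpace ℝ (Fin (n + 1)))} (hΩo : IsOpen Ω)
    {u : EuclideanSpace ℝ (Fin (n + 1)) → ℝ} {u₀ : ℝ}
    (hud : ∀ x ∈ Ω, DifferentiableAt ℝ u x) (hpos : ∀ x ∈ Ω, 0 < u x - u₀)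
    {x : EuclideanSpace ℝ (Fin (n + 1))} (hx : x ∈ Ω)
    (hd2 : DifferentiableAt ℝ (fun y => fderiv ℝ u y) x)
    (v : EuclideanSpace ℝ (Fin (n + 1))) (hv : fderiv ℝ u x v = 0) :
    HasDerivAt (fun s : ℝ => fderiv ℝ u (x + s • v) v / √(2 * (u (x + s • v) - u₀)))
      (fderiv ℝ (fderiv ℝ u) x v v / √(2 * (u x - u₀))) 0 := by
  have h1 := (w_line hΩo hud hpos hx v).self_of_nhds
  have hp : 0 < √(2 * (u x - u₀)) := Real.sqrt_pos.2 (by have := hpos x hx; positivity)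
  have h2 := (line_deriv2 (v := v) hd2).div h1 (by simpa using hp.ne')
  simp only [zero_smul, add_zero, hv] at h2
  rw [zero_mul, sub_zero, sq, mul_div_mul_right _ _ hp.ne'] at h2
  exact h2

/-- The two-point maximum principle at interior points. -/
lemma interior_max {n : ℕ} {Ω : Set (EuclideanSpace ℝ (Fin (n + 1)))}
    (hΩo : IsOpen Ω) {u : EuclideanSpace ℝ (Fin (n + 1)) → ℝ} {u₀ : ℝ}
    (hud : ∀ x ∈ Ω, DifferentiableAt ℝ u x)
    {p : EuclideanSpace ℝ (Fin (n + 1))}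
    (hcrit : ∀ x ∈ Ω, (gradient u x = 0 ↔ x = p))
    (hud2 : ∀ x ∈ Ω \ {p}, DifferentiableAt ℝ (fun y => fderiv ℝ u y) x)
    (heq : ∀ x ∈ Ω \ {p}, ∀ (g : EuclideanSpace ℝ (Fin (n + 1))) (s : ℝ), s ≠ 0 → g ≠ 0 →
      gradient u x = s • g → ∑ k, fderiv ℝ (fderiv ℝ u) x (xi g k) (xi g k) = -1)
    (hpos : ∀ x ∈ Ω, 0 < u x - u₀) {a b : ℝ} (ha : 0 < a) (hb : 0 < b) (hab : a + b = 1)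
    {x y : EuclideanSpace ℝ (Fin (n + 1))} (hx : x ∈ Ω) (hy : y ∈ Ω) (hz : a • x + b • y ∈ Ω)
    (hmax : ∀ x' ∈ Ω, ∀ y' ∈ Ω,
      a * √(2 * (u x' - u₀)) + b * √(2 * (u y' - u₀)) - √(2 * (u (a • x' + b • y') - u₀))
      ≤ a * √(2 * (u x - u₀)) + b * √(2 * (u y - u₀)) - √(2 * (u (a • x + b • y) - u₀))) :
    a * √(2 * (u x - u₀)) + b * √(2 * (u y - u₀)) ≤ √(2 * (u (a • x + b • y) - u₀)) := by
  set z := a • x + b • y with hzdef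
  have hW : ∀ q ∈ Ω, 0 < √(2 * (u q - u₀)) := fun q hq =>
    Real.sqrt_pos.2 (by have := hpos q hq; positivity)
  have hloc : ∀ v₁ v₂, IsLocalMax (fun s : ℝ => a * √(2 * (u (x + s • v₁) - u₀))
      + b * √(2 * (u (y + s • v₂) - u₀)) - √(2 * (u (z + s • (a • v₁ + b • v₂)) - u₀))) 0 := by
    intro v₁ v₂
    filter_upwards [(line_tendsto x v₁).eventually (hΩo.mem_nhds hx),
      (line_tendsto y v₂).eventually (hΩo.mem_nhds hy)] with s h1 h2
    have h := hmax _ h1 _ h2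
    have e : a • (x + s • v₁) + b • (y + s • v₂) = z + s • (a • v₁ + b • v₂) := by
      rw [hzdef]; module
    rw [e] at h
    simpa using h
  have hd : ∀ v₁ v₂, ∀ᶠ s in 𝓝 (0:ℝ), HasDerivAt (fun s : ℝ => a * √(2 * (u (x + s • v₁) - u₀))
      + b * √(2 * (u (y + s • v₂) - u₀)) - √(2 * (u (z + s • (a • v₁ + b • v₂)) - u₀)))
      (a * (fderiv ℝ u (x + s • v₁) v₁ / √(2 * (u (x + s • v₁) - u₀)))
      + b * (fderiv ℝ u (y + s • v₂) v₂ / √(2 * (u (y + s • v₂) - u₀)))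
      - fderiv ℝ u (z + s • (a • v₁ + b • v₂)) (a • v₁ + b • v₂)
        / √(2 * (u (z + s • (a • v₁ + b • v₂)) - u₀))) s := by
    intro v₁ v₂
    filter_upwards [w_line hΩo hud hpos hx v₁, w_line hΩo hud hpos hy v₂,
      w_line hΩo hud hpos hz (a • v₁ + b • v₂)] with s h1 h2 h3
    exact ((h1.const_mul a).add (h2.const_mul b)).sub h3
  have hfirst : ∀ v₁ v₂, a * (fderiv ℝ u x v₁ / √(2 * (u x - u₀)))
      + b * (fderiv ℝ u y v₂ / √(2 * (u y - u₀)))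
      - fderiv ℝ u z (a • v₁ + b • v₂) / √(2 * (u z - u₀)) = 0 := by
    intro v₁ v₂
    have := (hloc v₁ v₂).hasDerivAt_eq_zero (hd v₁ v₂).self_of_nhds
    simpa using this
  set X := √(2 * (u x - u₀)) with hX
  set Y := √(2 * (u y - u₀)) with hY
  set Z := √(2 * (u z - u₀)) with hZ
  have hXp : 0 < X := hW x hx
  have hYp : 0 < Y := hW y hy
  have hZp : 0 < Z := hW z hz
  set g := Z⁻¹ • gradient u z with hgdef
  have hgz : gradient u z = Z • g := by rw [hgdef, smul_smul, mul_inv_cancel₀ hZp.ne', one_smul]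
  have hgx : gradient u x = X • g := by
    refine ext_inner_right ℝ fun v => ?_
    have h := hfirst v 0
    simp only [map_zero, zero_div, mul_zero, smul_zero, add_zero, map_smul, smul_eq_mul] at h
    rw [← fderiv_eq_inner, inner_smul_left, hgdef, inner_smul_left, ← fderiv_eq_inner]
    simp only [conj_trivial]
    field_simp at h ⊢
    rw [mul_zero] at h
    exact sub_eq_zero.1 ((mul_eq_zero.1 h).resolve_left ha.ne')
  have hgy : gradient u y = Y • g := by
    refine ext_inner_right ℝ fun v => ?_
    have h := hfirst 0 v
    simp only [map_zero, zero_div, mul_zero, smul_zero, zero_add, map_smul, smul_eq_mul] at h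
    rw [← fderiv_eq_inner, inner_smul_left, hgdef, inner_smul_left, ← fderiv_eq_inner]
    simp only [conj_trivial]
    field_simp at h ⊢
    rw [mul_zero] at h
    exact sub_eq_zero.1 ((mul_eq_zero.1 h).resolve_left hb.ne')
  by_cases hg : g = 0
  · rw [hg, smul_zero] at hgx hgy hgz
    have h1 := (hcrit x hx).1 hgx
    have h2 := (hcrit y hy).1 hgy
    have h3 := (hcrit z hz).1 hgz
    rw [hX, hY, hZ, h1, h2, h3, ← add_mul, hab, one_mul]
  have hne : ∀ q ∈ Ω, ∀ r : ℝ, 0 < r → gradient u q = r • g → q ∈ Ω \ {p} := by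
    intro q hq r hr h
    refine ⟨hq, fun hqp => ?_⟩
    rw [(hcrit q hq).2 hqp] at h
    rcases smul_eq_zero.1 h.symm with h | h
    · exact hr.ne' h
    · exact hg h
  have hx' := hne x hx X hXp hgx
  have hy' := hne y hy Y hYp hgy
  have hz' := hne z hz Z hZp hgz
  have sx := heq x hx' g X hXp.ne' hg hgx
  have sy := heq y hy' g Y hYp.ne' hg hgy
  have sz := heq z hz' g Z hZp.ne' hg hgz
  have hk : ∀ k, a * X * fderiv ℝ (fderiv ℝ u) x (xi g k) (xi g k)
      + b * Y * fderiv ℝ (fderiv ℝ u) y (xi g k) (xi g k)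
      - (a * X + b * Y) ^ 2 / Z * fderiv ℝ (fderiv ℝ u) z (xi g k) (xi g k) ≤ 0 := by
    intro k
    set v := xi g k with hv
    have hort : inner ℝ g v = 0 := inner_xi g hg k
    have e : a • (X • v) + b • (Y • v) = (a * X + b * Y) • v := by module
    have kx : ∀ r : ℝ, fderiv ℝ u x (r • v) = 0 := by
      intro r; rw [map_smul, fderiv_eq_inner, hgx, inner_smul_left, hort]; simp
    have ky : ∀ r : ℝ, fderiv ℝ u y (r • v) = 0 := by
      intro r; rw [map_smul, fderiv_eq_inner, hgy, inner_smul_left, hort]; simp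
    have kz : ∀ r : ℝ, fderiv ℝ u z (r • v) = 0 := by
      intro r; rw [map_smul, fderiv_eq_inner, hgz, inner_smul_left, hort]; simp
    have d1 := w_line2 hΩo hud hpos hx (hud2 x hx') (X • v) (kx X)
    have d2 := w_line2 hΩo hud hpos hy (hud2 y hy') (Y • v) (ky Y)
    have d3 := w_line2 hΩo hud hpos hz (hud2 z hz') (a • (X • v) + b • (Y • v))
      (by rw [e]; exact kz _)
    have h := second_order (hloc (X • v) (Y • v)) (hd (X • v) (Y • v))
      (((d1.const_mul a).add (d2.const_mul b)).sub d3)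
    rw [← hX, ← hY, ← hZ, e] at h
    simp only [map_smul, smul_apply, smul_eq_mul] at h
    refine le_trans (le_of_eq ?_) h
    field_simp
  have hs := Finset.sum_nonpos (fun k (_ : k ∈ Finset.univ) => hk k)
  rw [Finset.sum_sub_distrib, Finset.sum_add_distrib, ← Finset.mul_sum, ← Finset.mul_sum,
    ← Finset.mul_sum, sx, sy, sz] at hs
  have hS : 0 < a * X + b * Y := by positivity
  have h1 : (a * X + b * Y) ^ 2 / Z ≤ a * X + b * Y := by linarith
  rw [div_le_iff₀ hZp] at h1
  nlinarith

/-- No positive maximum with a boundary point. -/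
lemma boundary_contra {n : ℕ} {Ω : Set (EuclideanSpace ℝ (Fin (n + 1)))}
    (hΩo : IsOpen Ω) {u : EuclideanSpace ℝ (Fin (n + 1)) → ℝ} {u₀ : ℝ}
    (hud : ∀ x ∈ Ω, DifferentiableAt ℝ u x)
    (hpos : ∀ x ∈ Ω, 0 < u x - u₀) {a : ℝ} (ha : 0 < a)
    {x z ν : EuclideanSpace ℝ (Fin (n + 1))} (hz : z ∈ Ω)
    {R m : ℝ} (hR : 0 < R) (hm : 0 < m)
    (hgrow : ∀ t, 0 < t → t < R → x + t • ν ∈ Ω ∧ m * t ≤ u (x + t • ν) - u₀)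
    (hmax : ∀ x' ∈ Ω, a * √(2 * (u x' - u₀)) ≤
      √(2 * (u (z + a • (x' - x)) - u₀)) - √(2 * (u z - u₀))) : False := by
  have hd := (w_line hΩo hud hpos hz (a • ν)).self_of_nhds
  obtain ⟨C, hC⟩ := hd.isBigO_sub.bound
  obtain ⟨δ, hδ, hball⟩ := Metric.eventually_nhds_iff.1 hC
  have key : ∀ t, 0 < t → t < R → t < δ → 2 * m * a ^ 2 ≤ C ^ 2 * t := by
    intro t ht htR htδ
    obtain ⟨h1, h2⟩ := hgrow t ht htR
    have h3 := hmax _ h1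
    have h4 := hball (y := t) (by simpa [abs_of_pos ht] using htδ)
    have e : z + a • (x + t • ν - x) = z + t • a • ν := by module
    rw [e] at h3
    simp only [zero_smul, add_zero, sub_zero, Real.norm_eq_abs, abs_of_pos ht] at h4
    have h5 : a * √(2 * (u (x + t • ν) - u₀)) ≤ C * t := h3.trans ((le_abs_self _).trans h4)
    have h6 : a * √(2 * (m * t)) ≤ C * t := le_trans (by gcongr) h5
    have h7 : (a * √(2 * (m * t))) ^ 2 ≤ (C * t) ^ 2 := by gcongr
    rw [mul_pow, Real.sq_sqrt (by positivity)] at h7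
    have h8 : t * (2 * m * a ^ 2) ≤ t * (C ^ 2 * t) := by nlinarith
    exact le_of_mul_le_mul_left h8 ht
  have hA : 0 < 2 * m * a ^ 2 := by positivity
  set t := min (min (R / 2) (δ / 2)) (m * a ^ 2 / (C ^ 2 + 1)) with ht
  have ht0 : 0 < t := by positivity
  have ht1 : t ≤ R / 2 := (min_le_left _ _).trans (min_le_left _ _)
  have ht2 : t ≤ δ / 2 := (min_le_left _ _).trans (min_le_right _ _)
  have ht3 : t * (C ^ 2 + 1) ≤ m * a ^ 2 := by
    rw [← le_div_iff₀ (by positivity)]; exact min_le_right _ _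
  have := key t ht0 (by linarith) (by linarith)
  nlinarith

end ArrivalTime

/-- Concavity of the square root of the arrival time of mean curvature flow
(Theorem 2, first part): if `u ∈ C¹(Ω̄)` has a single critical point `p`, is
twice differentiable in `Ω \ {p}`, satisfies the level set flow equation
`-|Du| div(Du/|Du|) = 1` there and `u ≡ u₀` on `∂Ω`, then `√(2(u-u₀))` is
concave. -/
theorem stmt15 {n : ℕ}
    (Ω : Set (EuclideanSpace ℝ (Fin (n + 1))))
    (hΩo : IsOpen Ω) (hΩc : Convex ℝ Ω) (hΩb : IsBounded Ω)
    -- smooth boundary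
    (hsb : ∃ f : EuclideanSpace ℝ (Fin (n + 1)) → ℝ, ContDiff ℝ (⊤ : ℕ∞) f ∧
      Ω = {x | f x < 0} ∧ ∀ x ∈ frontier Ω, fderiv ℝ f x ≠ 0)
    (u : EuclideanSpace ℝ (Fin (n + 1)) → ℝ) (u₀ : ℝ)
    (hu : ContDiffOn ℝ 1 u (closure Ω))
    (hud : ∀ x ∈ Ω, DifferentiableAt ℝ u x)
    (p : EuclideanSpace ℝ (Fin (n + 1))) (hp : p ∈ Ω)
    -- `p` is the unique critical point of `u` in `Ω`
    (hcrit : ∀ x ∈ Ω, (gradient u x = 0 ↔ x = p))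
    -- `u` is twice differentiable in `Ω \ {p}`
    (hud2 : ∀ x ∈ Ω \ {p}, DifferentiableAt ℝ (fun y => fderiv ℝ u y) x)
    -- the level set mean curvature flow equation in `Ω \ {p}`
    (heq : ∀ x ∈ Ω \ {p},
      -(∑ i, ∑ j,
        ((if i = j then (1:ℝ) else 0)
            - fderiv ℝ u x (EuclideanSpace.single i 1)
              * fderiv ℝ u x (EuclideanSpace.single j 1) / ‖gradient u x‖ ^ 2)
          * fderiv ℝ (fun y => fderiv ℝ u y (EuclideanSpace.single j 1)) x
              (EuclideanSpace.single i 1)) = 1)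
    -- boundary condition
    (hbc : ∀ x ∈ frontier Ω, u x = u₀) :
    ConcaveOn ℝ (closure Ω) (fun x => Real.sqrt (2 * (u x - u₀))) := by
  classical
  have hcont : ContinuousOn u (closure Ω) := hu.continuousOn
  have heq' : ∀ x ∈ Ω \ {p}, ∀ (g : EuclideanSpace ℝ (Fin (n + 1))) (s : ℝ), s ≠ 0 → g ≠ 0 →
      gradient u x = s • g →
      ∑ k, fderiv ℝ (fderiv ℝ u) x (ArrivalTime.xi g k) (ArrivalTime.xi g k) = -1 :=
    fun x hx g s hs hg hgr => ArrivalTime.eq_xi u x g s hs hg hgr (hud2 x hx) (heq x hx)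
  obtain ⟨κ, hκ, hκ'⟩ : ∃ κ : ℝ, 0 < κ ∧ 2 * κ * (n + 1) < 1 :=
    ⟨1 / (4 * (n + 1)), by positivity, by field_simp; norm_num⟩
  have hbar := ArrivalTime.barrier Ω hΩo hΩb u u₀ hcont hud p hcrit hud2 heq' hbc κ hκ hκ'
  have hfr : ∀ y ∈ frontier Ω, y ∉ Ω := fun y hy => by
    rw [hΩo.frontier_eq] at hy; exact hy.2
  -- positivity
  have hpos : ∀ x ∈ Ω, 0 < u x - u₀ := by
    intro x hx
    obtain ⟨r, hr, hball⟩ := Metric.isOpen_iff.1 hΩo x hx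
    obtain ⟨c, hc, hcr⟩ : ∃ c, c ≠ p ∧ ‖x - c‖ < r / 2 := by
      by_cases hxp : x = p
      · refine ⟨x + EuclideanSpace.single 0 (r / 4), ?_, ?_⟩
        · rw [hxp]
          simp
          linarith
        · simp [abs_of_pos hr]
          linarith
      · exact ⟨x, hxp, by simpa using hr⟩
    have h := hbar c hc (r / 2) (by positivity) (fun y hy => by
      by_contra hcon
      push Not at hcon
      refine hfr y hy (hball ?_)
      rw [Metric.mem_ball, dist_eq_norm]
      have : y - x = (y - c) - (x - c) := by abel
      rw [this]
      exact (norm_sub_le _ _).trans_lt (by linarith)) x (subset_closure hx)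
    have h2 : ‖x - c‖ ^ 2 < (r / 2) ^ 2 := by
      have := norm_nonneg (x - c)
      gcongr
    exact lt_of_lt_of_le (mul_pos hκ (by linarith)) h
  -- growth at the boundary
  obtain ⟨f, hf, hΩf, hdf⟩ := hsb
  have hgrow : ∀ x ∈ frontier Ω, ∃ (ν : EuclideanSpace ℝ (Fin (n + 1))) (R m : ℝ), 0 < R ∧ 0 < m ∧
      ∀ t, 0 < t → t < R → x + t • ν ∈ Ω ∧ m * t ≤ u (x + t • ν) - u₀ := by
    intro x hx
    obtain ⟨ν, hν, R₀, hR₀, hb⟩ := ArrivalTime.interior_ball Ω hΩo f hf hΩf x hx (hdf x hx)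
    obtain ⟨R, hR, hRR, hRp⟩ : ∃ R, 0 < R ∧ R ≤ R₀ ∧ x + R • ν ≠ p := by
      by_cases h : x + R₀ • ν = p
      · refine ⟨R₀ / 2, by positivity, by linarith, fun h' => ?_⟩
        rw [← h'] at h
        have h2 := add_left_cancel h
        have hν0 : ν ≠ 0 := by
          intro h0
          simp [h0] at hν
        have := smul_left_injective ℝ hν0 h2
        linarith
      · exact ⟨R₀, hR₀, le_rfl, h⟩
    refine ⟨ν, R, κ * R, hR, by positivity, fun t ht htR => ?_⟩
    have e : ‖x + t • ν - (x + R • ν)‖ = R - t := by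
      have : x + t • ν - (x + R • ν) = (t - R) • ν := by module
      rw [this, norm_smul, hν, mul_one, Real.norm_eq_abs, abs_of_neg (by linarith)]
      ring
    have hin : x + t • ν ∈ Ω := hb R hR hRR _ (by rw [e]; linarith)
    refine ⟨hin, ?_⟩
    have h := hbar (x + R • ν) hRp R hR.le (fun y hy => by
      by_contra hcon
      push Not at hcon
      exact hfr y hy (hb R hR hRR y hcon)) _ (subset_closure hin)
    rw [e] at h
    refine le_trans ?_ h
    rw [mul_assoc]
    gcongr
    nlinarith
  -- two-point maximum principle
  refine ⟨hΩc.closure, fun x₁ hx₁ y₁ hy₁ a b ha hb hab => ?_⟩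
  rcases ha.eq_or_lt with ha0 | ha0
  · have : b = 1 := by linarith
    subst this
    simp [← ha0]
  rcases hb.eq_or_lt with hb0 | hb0
  · have : a = 1 := by linarith
    subst this
    simp [← hb0]
  simp only [smul_eq_mul]
  have hw : ContinuousOn (fun x => √(2 * (u x - u₀))) (closure Ω) := by fun_prop
  have hcomp := hΩb.isCompact_closure.prod hΩb.isCompact_closure
  obtain ⟨⟨x, y⟩, ⟨hx, hy⟩, hmax⟩ := hcomp.exists_isMaxOn ⟨(x₁, y₁), hx₁, hy₁⟩
    (f := fun q => a * √(2 * (u q.1 - u₀)) + b * √(2 * (u q.2 - u₀))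
      - √(2 * (u (a • q.1 + b • q.2) - u₀))) (by
    have h1 : ContinuousOn (fun q : EuclideanSpace ℝ (Fin (n + 1)) × EuclideanSpace ℝ (Fin (n + 1))
        => √(2 * (u q.1 - u₀))) (closure Ω ×ˢ closure Ω) :=
      hw.comp continuousOn_fst fun q hq => hq.1
    have h2 : ContinuousOn (fun q : EuclideanSpace ℝ (Fin (n + 1)) × EuclideanSpace ℝ (Fin (n + 1))
        => √(2 * (u q.2 - u₀))) (closure Ω ×ˢ closure Ω) :=
      hw.comp continuousOn_snd fun q hq => hq.2
    have h3 : ContinuousOn (fun q : EuclideanSpace ℝ (Fin (n + 1)) × EuclideanSpace ℝ (Fin (n + 1))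
        => √(2 * (u (a • q.1 + b • q.2) - u₀))) (closure Ω ×ˢ closure Ω) :=
      hw.comp (f := fun q : EuclideanSpace ℝ (Fin (n + 1)) × EuclideanSpace ℝ (Fin (n + 1))
        => a • q.1 + b • q.2) (by fun_prop) fun q hq => hΩc.closure hq.1 hq.2 ha hb hab
    fun_prop)
  have hmax' : ∀ x' ∈ closure Ω, ∀ y' ∈ closure Ω,
      a * √(2 * (u x' - u₀)) + b * √(2 * (u y' - u₀)) - √(2 * (u (a • x' + b • y') - u₀))
      ≤ a * √(2 * (u x - u₀)) + b * √(2 * (u y - u₀)) - √(2 * (u (a • x + b • y) - u₀)) :=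
    fun x' hx' y' hy' => hmax (show (x', y') ∈ closure Ω ×ˢ closure Ω from ⟨hx', hy'⟩)
  suffices hs : a * √(2 * (u x - u₀)) + b * √(2 * (u y - u₀))
      - √(2 * (u (a • x + b • y) - u₀)) ≤ 0 by
    have := hmax' x₁ hx₁ y₁ hy₁
    linarith
  have hfro : ∀ q ∈ closure Ω, q ∉ Ω → q ∈ frontier Ω := fun q h1 h2 => by
    rw [hΩo.frontier_eq]; exact ⟨h1, h2⟩
  have hw0 : ∀ q ∈ frontier Ω, √(2 * (u q - u₀)) = 0 := fun q hq => by simp [hbc q hq]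
  by_cases hxo : x ∈ Ω
  · have hz : a • x + b • y ∈ Ω := by
      have := hΩc.combo_interior_closure_mem_interior (by rwa [hΩo.interior_eq]) hy ha0 hb hab
      rwa [hΩo.interior_eq] at this
    by_cases hyo : y ∈ Ω
    · have := ArrivalTime.interior_max hΩo hud hcrit hud2 heq' hpos ha0 hb0 hab hxo hyo hz
        (fun x' hx' y' hy' => hmax' x' (subset_closure hx') y' (subset_closure hy'))
      linarith
    · exfalso
      have hyf := hfro y hy hyo
      obtain ⟨ν, R, m, hR, hm, hg⟩ := hgrow y hyf
      refine ArrivalTime.boundary_contra hΩo hud hpos hb0 hz hR hm hg fun y' hy' => ?_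
      have h := hmax' x hx y' (subset_closure hy')
      rw [hw0 y hyf] at h
      have e : a • x + b • y + b • (y' - y) = a • x + b • y' := by module
      rw [e]
      linarith
  · have hxf := hfro x hx hxo
    by_cases hyo : y ∈ Ω
    · exfalso
      have hz : a • x + b • y ∈ Ω := by
        have := hΩc.combo_closure_interior_mem_interior hx (by rwa [hΩo.interior_eq]) ha hb0 hab
        rwa [hΩo.interior_eq] at this
      obtain ⟨ν, R, m, hR, hm, hg⟩ := hgrow x hxf
      refine ArrivalTime.boundary_contra hΩo hud hpos ha0 hz hR hm hg fun x' hx' => ?_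
      have h := hmax' x' (subset_closure hx') y hy
      rw [hw0 x hxf] at h
      have e : a • x + b • y + a • (x' - x) = a • x' + b • y := by module
      rw [e]
      linarith
    · rw [hw0 x hxf, hw0 y (hfro y hy hyo)]
      have := Real.sqrt_nonneg (2 * (u (a • x + b • y) - u₀))
      linarith
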